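/- arXiv:math/0102186 — 4 statements merged into one kernel-verified Lean document; each statement's English description precedes it below -/
import Mathlib

section
/- Let Δ and Δ' be finite-dimensional abstract simplicial complexes on disjoint vertex sets, with facets σ0 and σ0' respectively. Then a permutation ρ of σ0 ∪ σ0' belongs to Π(Δ*Δ', σ0 ∪ σ0') if and only if ρ(σ0) = σ0, ρ(σ0') = σ0', ρ restricted to σ0 lies in Π(Δ,σ0), and ρ restricted to σ0' lies in Π(Δ',σ0'). Consequently Π(Δ*Δ', σ0 ∪ σ0') ≅ Π(Δ,σ0) × Π(Δ',σ0'). -/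
/-- An abstract simplicial complex on the vertex set `V`: a nonempty collection of finite
subsets of `V` (the faces) which is closed under taking subsets. -/
structure ASC (V : Type*) where
  faces : Set (Finset V)
  faces_nonempty : faces.Nonempty
  down_closed : ∀ {σ τ : Finset V}, σ ∈ faces → τ ⊆ σ → τ ∈ faces

namespace ASC

variable {V : Type*} [DecidableEq V]

/-- Two facets are adjacent if they share a common ridge, i.e. they have the same
cardinality and differ in exactly one vertex. -/
def Adj (σ τ : Finset V) : Prop :=
  σ ≠ τ ∧ σ.card = τ.card ∧ (σ \ τ).card = 1

/-- A facet: an inclusion-maximal face. -/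
def IsFacet (Δ : ASC V) (σ : Finset V) : Prop :=
  σ ∈ Δ.faces ∧ ∀ τ ∈ Δ.faces, σ ⊆ τ → σ = τ

/-- The perspectivity from `σ` to `τ` as a map on vertices: it sends the unique vertex of
`σ \ τ` to the unique vertex of `τ \ σ` and fixes all other vertices. -/
noncomputable def perspMap (σ τ : Finset V) : V → V := fun x =>
  if x ∈ σ \ τ then ((τ \ σ).toList.head?.getD x) else x

/-- The projectivity along a facet path, as a map on vertices (the composition of the
consecutive perspectivities, rightmost, i.e. first perspectivity, applied first). -/
noncomputable def projMap : List (Finset V) → V → V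
  | [] => id
  | [_] => id
  | σ :: τ :: rest => (projMap (τ :: rest)) ∘ (perspMap σ τ)

/-- `L` is a facet path in `Δ` from `σ` to `τ`. -/
def IsFacetPath (Δ : ASC V) (L : List (Finset V)) (σ τ : Finset V) : Prop :=
  L ≠ [] ∧ L.head? = some σ ∧ L.getLast? = some τ ∧
    (∀ s ∈ L, Δ.IsFacet s) ∧ L.Chain' Adj

/-- The permutation `π` of the facet `σ0` is the projectivity along the facet path `L`. -/
def Represents (σ0 : Finset V) (π : Equiv.Perm {x // x ∈ σ0}) (L : List (Finset V)) : Prop :=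
  ∀ x : {x // x ∈ σ0}, (π x).1 = projMap L x.1

/-- The group of projectivities of `Δ` at the facet `σ0`: the subgroup of `Sym σ0`
consisting of the projectivities along all facet loops based at `σ0`. -/
def ProjGroup (Δ : ASC V) (σ0 : Finset V) : Subgroup (Equiv.Perm {x // x ∈ σ0}) :=
  Subgroup.closure {π | ∃ L, Δ.IsFacetPath L σ0 σ0 ∧ Represents σ0 π L}

end ASC

open ASC

variable {V V' : Type*} [DecidableEq V] [DecidableEq V']

/-!
A facet of the join is the union of a facet of `Δ` and a facet of `Δ'`. If two adjacent facets of
the join differ in a vertex of one part, then the other part of the first is contained in that of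
the second, hence equal to it by maximality; so a perspectivity of the join is a perspectivity of
one factor and the identity on the other. Consequently the projectivities of the join are exactly
the maps `Sum.map f f'` with `f` and `f'` projectivities of the factors, any such pair being
realised by moving first in `Δ` and then in `Δ'`.
-/

namespace ASC

section Projectivity

variable {Δ : ASC V} {σ τ υ : Finset V} {f g : V → V}

theorem Adj.exists_sdiff_eq_singleton (h : Adj σ τ) :
    ∃ a b, σ \ τ = {a} ∧ τ \ σ = {b} := by
  obtain ⟨-, hcard, hsdiff⟩ := h
  obtain ⟨a, ha⟩ := Finset.card_eq_one.1 hsdiff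
  obtain ⟨b, hb⟩ := Finset.card_eq_one.1 ((Finset.card_sdiff_comm hcard).symm.trans hsdiff)
  exact ⟨a, b, ha, hb⟩

theorem perspMap_of_sdiff_eq_singleton {b : V} (hb : τ \ σ = {b}) :
    perspMap σ τ = fun x => if x ∈ σ \ τ then b else x := by
  funext x
  simp only [perspMap, hb, Finset.toList_singleton, List.head?_cons, Option.getD_some]

theorem Adj.bijOn_perspMap (h : Adj σ τ) : Set.BijOn (perspMap σ τ) σ τ := by
  obtain ⟨a, b, ha, hb⟩ := h.exists_sdiff_eq_singleton
  rw [perspMap_of_sdiff_eq_singleton hb, ha]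
  simp only [Finset.ext_iff, Finset.mem_sdiff, Finset.mem_singleton] at ha hb
  refine ⟨fun x hx => by grind, fun x hx y hy hxy => by grind, fun y hy => ?_⟩
  by_cases hyb : y = b
  · exact ⟨a, by grind, by simp [hyb]⟩
  · exact ⟨y, by grind, by grind⟩

theorem isFacetPath_iff {L : List (Finset V)} :
    Δ.IsFacetPath L σ τ ↔ L ≠ [] ∧ L.head? = some σ ∧ L.getLast? = some τ ∧
      (∀ ρ ∈ L, Δ.IsFacet ρ) ∧ L.IsChain Adj :=
  Iff.rfl

theorem isFacetPath_singleton : Δ.IsFacetPath [υ] σ τ ↔ υ = σ ∧ υ = τ ∧ Δ.IsFacet υ := by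
  simp [isFacetPath_iff]

theorem isFacetPath_cons_cons {ρ : Finset V} {L : List (Finset V)} :
    Δ.IsFacetPath (ρ :: υ :: L) σ τ ↔
      ρ = σ ∧ Δ.IsFacet ρ ∧ Adj ρ υ ∧ Δ.IsFacetPath (υ :: L) υ τ := by
  grind [isFacetPath_iff]

/-- `Δ.IsProjectivity σ τ f`: the vertex map `f` is the projectivity along some facet path of `Δ`
from `σ` to `τ`. Facet paths are built up by prepending facets, which replaces the list
manipulations of `IsFacetPath` and `projMap` by induction. -/
inductive IsProjectivity (Δ : ASC V) : Finset V → Finset V → (V → V) → Prop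
  | refl {σ : Finset V} (hσ : Δ.IsFacet σ) : IsProjectivity Δ σ σ id
  | cons {σ τ υ : Finset V} {f : V → V} (hσ : Δ.IsFacet σ) (hadj : Adj σ τ)
      (hf : IsProjectivity Δ τ υ f) : IsProjectivity Δ σ υ (f ∘ perspMap σ τ)

theorem IsProjectivity.isFacet_left (hf : Δ.IsProjectivity σ τ f) : Δ.IsFacet σ := by
  cases hf <;> assumption

theorem IsProjectivity.trans (hf : Δ.IsProjectivity σ τ f) (hg : Δ.IsProjectivity τ υ g) :
    Δ.IsProjectivity σ υ (g ∘ f) := by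
  induction hf with
  | refl => exact hg
  | cons hσ hadj _ ih => exact .cons hσ hadj (ih hg)

theorem IsProjectivity.bijOn (hf : Δ.IsProjectivity σ τ f) : Set.BijOn f σ τ := by
  induction hf with
  | refl => exact Set.bijOn_id _
  | cons _ hadj _ ih => exact ih.comp hadj.bijOn_perspMap

theorem IsFacetPath.isProjectivity {L : List (Finset V)} (hL : Δ.IsFacetPath L σ τ) :
    Δ.IsProjectivity σ τ (projMap L) := by
  induction L generalizing σ with
  | nil => exact absurd rfl hL.1
  | cons ρ L ih =>
    cases L with
    | nil =>
      obtain ⟨rfl, rfl, hρ⟩ := isFacetPath_singleton.1 hL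
      exact .refl hρ
    | cons υ L =>
      obtain ⟨rfl, hρ, hadj, hpath⟩ := isFacetPath_cons_cons.1 hL
      exact .cons hρ hadj (ih hpath)

theorem IsProjectivity.exists_isFacetPath (hf : Δ.IsProjectivity σ τ f) :
    ∃ L, Δ.IsFacetPath L σ τ ∧ projMap L = f := by
  induction hf with
  | @refl σ hσ => exact ⟨[σ], isFacetPath_singleton.2 ⟨rfl, rfl, hσ⟩, rfl⟩
  | @cons σ τ _ _ hσ hadj _ ih =>
    obtain ⟨_ | ⟨ρ, L⟩, hL, rfl⟩ := ih
    · exact absurd rfl hL.1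
    · obtain rfl : ρ = τ := by simpa using hL.2.1
      exact ⟨σ :: ρ :: L, isFacetPath_cons_cons.2 ⟨rfl, hσ, hadj, hL⟩, rfl⟩

theorem mem_projGroup_iff (hσ : Δ.IsFacet σ) {π : Equiv.Perm {x // x ∈ σ}} :
    π ∈ Δ.ProjGroup σ ↔ ∃ f, Δ.IsProjectivity σ σ f ∧ ∀ x, (π x).1 = f x.1 := by
  constructor
  · intro hπ
    -- `Sym(σ)` is finite, so inverses are powers and closure under composition suffices.
    rw [ProjGroup, ← Subgroup.mem_toSubmonoid, Subgroup.closure_toSubmonoid_of_finite] at hπ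
    induction hπ using Submonoid.closure_induction with
    | mem π hπ =>
      obtain ⟨L, hL, hrep⟩ := hπ
      exact ⟨projMap L, hL.isProjectivity, hrep⟩
    | one => exact ⟨id, .refl hσ, fun _ => rfl⟩
    | mul π₁ π₂ _ _ ih₁ ih₂ =>
      obtain ⟨f₁, hf₁, hπ₁⟩ := ih₁
      obtain ⟨f₂, hf₂, hπ₂⟩ := ih₂
      exact ⟨f₁ ∘ f₂, hf₂.trans hf₁, fun x => by simp [hπ₁, hπ₂]⟩
  · rintro ⟨f, hf, hπ⟩
    obtain ⟨L, hL, rfl⟩ := hf.exists_isFacetPath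
    exact Subgroup.subset_closure ⟨L, hL, hπ⟩

theorem IsProjectivity.exists_mem_projGroup (hf : Δ.IsProjectivity σ σ f) :
    ∃ π ∈ Δ.ProjGroup σ, ∀ x, (π x).1 = f x.1 :=
  have hπ : ∀ x, (hf.bijOn.equiv f x).1 = f x.1 := fun _ => rfl
  ⟨hf.bijOn.equiv f, (mem_projGroup_iff hf.isFacet_left).2 ⟨f, hf, hπ⟩, hπ⟩

end Projectivity

section Join

variable {α β : Type*}

/-- The join `Δ * Δ'`. The disjoint union of the vertex sets is `α ⊕ β`, and a face is recognised
by its intersections `toLeft` and `toRight` with the two summands. -/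
def join (Δ : ASC α) (Δ' : ASC β) : ASC (α ⊕ β) where
  faces := {s | s.toLeft ∈ Δ.faces ∧ s.toRight ∈ Δ'.faces}
  faces_nonempty := by
    obtain ⟨σ, hσ⟩ := Δ.faces_nonempty
    obtain ⟨σ', hσ'⟩ := Δ'.faces_nonempty
    exact ⟨σ.disjSum σ', by simpa using ⟨hσ, hσ'⟩⟩
  down_closed hs hts :=
    ⟨Δ.down_closed hs.1 (Finset.toLeft_subset_toLeft hts),
      Δ'.down_closed hs.2 (Finset.toRight_subset_toRight hts)⟩

theorem isFacet_join_iff {Δ : ASC α} {Δ' : ASC β} {s : Finset (α ⊕ β)} :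
    (Δ.join Δ').IsFacet s ↔ Δ.IsFacet s.toLeft ∧ Δ'.IsFacet s.toRight := by
  constructor
  · rintro ⟨hs, hmax⟩
    refine ⟨⟨hs.1, fun τ hτ hsub => ?_⟩, ⟨hs.2, fun τ' hτ' hsub => ?_⟩⟩
    · have h := hmax (τ.disjSum s.toRight) (by simpa [join] using ⟨hτ, hs.2⟩)
        (Finset.subset_disjSum.2 ⟨hsub, subset_rfl⟩)
      exact (Finset.eq_disjSum_iff.1 h).1
    · have h := hmax (s.toLeft.disjSum τ') (by simpa [join] using ⟨hs.1, hτ'⟩)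
        (Finset.subset_disjSum.2 ⟨subset_rfl, hsub⟩)
      exact (Finset.eq_disjSum_iff.1 h).2
  · rintro ⟨⟨hl, hlmax⟩, ⟨hr, hrmax⟩⟩
    refine ⟨⟨hl, hr⟩, fun t ht hst => ?_⟩
    rw [← t.toLeft_disjSum_toRight, Finset.eq_disjSum_iff]
    exact ⟨hlmax _ ht.1 (Finset.toLeft_subset_toLeft hst),
      hrmax _ ht.2 (Finset.toRight_subset_toRight hst)⟩

end Join

section JoinProjectivity

variable {Δ : ASC V} {Δ' : ASC V'} {s t : Finset (V ⊕ V')}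
  {σ τ : Finset V} {σ' τ' : Finset V'} {f : V → V} {f' : V' → V'}

theorem image_inl_union_image_inr (σ : Finset V) (σ' : Finset V') :
    σ.image Sum.inl ∪ σ'.image Sum.inr = σ.disjSum σ' := by
  ext (x | x) <;> simp

theorem adj_iff_of_toRight_eq (h : s.toRight = t.toRight) :
    Adj s t ↔ Adj s.toLeft t.toLeft := by
  rw [← s.toLeft_disjSum_toRight, ← t.toLeft_disjSum_toRight, ← h]
  simp [Adj, ← Finset.card_toLeft_add_card_toRight, Finset.toLeft_sdiff, Finset.toRight_sdiff]

theorem adj_iff_of_toLeft_eq (h : s.toLeft = t.toLeft) :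
    Adj s t ↔ Adj s.toRight t.toRight := by
  rw [← s.toLeft_disjSum_toRight, ← t.toLeft_disjSum_toRight, ← h]
  simp [Adj, ← Finset.card_toLeft_add_card_toRight, Finset.toLeft_sdiff, Finset.toRight_sdiff]

theorem perspMap_of_toRight_eq (hadj : Adj s t) (h : s.toRight = t.toRight) :
    perspMap s t = Sum.map (perspMap s.toLeft t.toLeft) id := by
  obtain ⟨-, b, -, hb⟩ := ((adj_iff_of_toRight_eq h).1 hadj).exists_sdiff_eq_singleton
  have hts : t \ s = {Sum.inl b} := by
    rw [← (t \ s).toLeft_disjSum_toRight, Finset.toLeft_sdiff, Finset.toRight_sdiff, hb, h]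
    simp
  rw [perspMap_of_sdiff_eq_singleton hb, perspMap_of_sdiff_eq_singleton hts]
  ext (x | x) : 1
  · simp only [Finset.mem_sdiff, Finset.mem_toLeft, Sum.map_inl, apply_ite Sum.inl]
  · simp [← Finset.mem_toRight, h]

theorem perspMap_of_toLeft_eq (hadj : Adj s t) (h : s.toLeft = t.toLeft) :
    perspMap s t = Sum.map id (perspMap s.toRight t.toRight) := by
  obtain ⟨-, b, -, hb⟩ := ((adj_iff_of_toLeft_eq h).1 hadj).exists_sdiff_eq_singleton
  have hts : t \ s = {Sum.inr b} := by
    rw [← (t \ s).toLeft_disjSum_toRight, Finset.toLeft_sdiff, Finset.toRight_sdiff, hb, h]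
    simp
  rw [perspMap_of_sdiff_eq_singleton hb, perspMap_of_sdiff_eq_singleton hts]
  ext (x | x) : 1
  · simp [← Finset.mem_toLeft, h]
  · simp only [Finset.mem_sdiff, Finset.mem_toRight, Sum.map_inr, apply_ite Sum.inr]

theorem eq_join_of_faces_eq {J : ASC (V ⊕ V')}
    (hJ : J.faces = {s | ∃ σ ∈ Δ.faces, ∃ σ' ∈ Δ'.faces,
      s = σ.image Sum.inl ∪ σ'.image Sum.inr}) : J = Δ.join Δ' := by
  have hfaces : J.faces = (Δ.join Δ').faces := by
    simp only [hJ, image_inl_union_image_inr, Finset.eq_disjSum_iff]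
    ext s
    simp [join]
  cases J
  cases hfaces
  rfl

theorem Adj.toRight_eq_or_toLeft_eq (hadj : Adj s t) (hs : (Δ.join Δ').IsFacet s)
    (ht : t ∈ (Δ.join Δ').faces) : s.toRight = t.toRight ∨ s.toLeft = t.toLeft := by
  obtain ⟨⟨-, hlmax⟩, ⟨-, hrmax⟩⟩ := isFacet_join_iff.1 hs
  have hcard : (s.toLeft \ t.toLeft).card + (s.toRight \ t.toRight).card = 1 := by
    rw [← Finset.toLeft_sdiff, ← Finset.toRight_sdiff, Finset.card_toLeft_add_card_toRight]
    exact hadj.2.2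
  have hsdiff : s.toRight \ t.toRight = ∅ ∨ s.toLeft \ t.toLeft = ∅ := by
    simp only [← Finset.card_eq_zero]
    omega
  simp only [Finset.sdiff_eq_empty_iff_subset] at hsdiff
  exact hsdiff.imp (hrmax _ ht.2) (hlmax _ ht.1)

theorem IsProjectivity.join (hf : Δ.IsProjectivity σ τ f) (hf' : Δ'.IsProjectivity σ' τ' f') :
    (Δ.join Δ').IsProjectivity (σ.disjSum σ') (τ.disjSum τ') (Sum.map f f') := by
  induction hf with
  | @refl σ hσ =>
    induction hf' with
    | refl hσ' =>
      rw [Sum.map_id_id]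
      exact .refl (isFacet_join_iff.2 (by simpa using ⟨hσ, hσ'⟩))
    | @cons σ' τ' _ _ hσ' hadj _ ih =>
      have hjadj : Adj (σ.disjSum σ') (σ.disjSum τ') :=
        (adj_iff_of_toLeft_eq (by simp)).2 (by simpa using hadj)
      have h := IsProjectivity.cons (isFacet_join_iff.2 (by simpa using ⟨hσ, hσ'⟩)) hjadj ih
      rw [perspMap_of_toLeft_eq hjadj (by simp), Sum.map_comp_map] at h
      simpa using h
  | @cons σ τ _ _ hσ hadj _ ih =>
    have hjadj : Adj (σ.disjSum σ') (τ.disjSum σ') :=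
      (adj_iff_of_toRight_eq (by simp)).2 (by simpa using hadj)
    have h := IsProjectivity.cons
      (isFacet_join_iff.2 (by simpa using ⟨hσ, hf'.isFacet_left⟩)) hjadj ih
    rw [perspMap_of_toRight_eq hjadj (by simp), Sum.map_comp_map] at h
    simpa using h

theorem IsProjectivity.exists_eq_sumMap {F : V ⊕ V' → V ⊕ V'}
    (hF : (Δ.join Δ').IsProjectivity s t F) :
    ∃ f f', Δ.IsProjectivity s.toLeft t.toLeft f ∧ Δ'.IsProjectivity s.toRight t.toRight f' ∧
      F = Sum.map f f' := by
  induction hF with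
  | refl hs =>
    obtain ⟨hl, hr⟩ := isFacet_join_iff.1 hs
    exact ⟨id, id, .refl hl, .refl hr, Sum.map_id_id.symm⟩
  | @cons s t _ _ hs hadj hF ih =>
    obtain ⟨hl, hr⟩ := isFacet_join_iff.1 hs
    obtain ⟨f, f', hf, hf', rfl⟩ := ih
    rcases hadj.toRight_eq_or_toLeft_eq hs hF.isFacet_left.1 with h | h
    · refine ⟨f ∘ perspMap s.toLeft t.toLeft, f',
        .cons hl ((adj_iff_of_toRight_eq h).1 hadj) hf, h ▸ hf', ?_⟩
      rw [perspMap_of_toRight_eq hadj h, Sum.map_comp_map, Function.comp_id]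
    · refine ⟨f, f' ∘ perspMap s.toRight t.toRight, h ▸ hf,
        .cons hr ((adj_iff_of_toLeft_eq h).1 hadj) hf', ?_⟩
      rw [perspMap_of_toLeft_eq hadj h, Sum.map_comp_map, Function.comp_id]

end JoinProjectivity

section SumPerm

variable {α β : Type*} {s : Finset (α ⊕ β)}

/-- The vertices of `s` as the disjoint union of its vertices in the two summands. -/
def sumVertexEquiv (s : Finset (α ⊕ β)) :
    {x // x ∈ s.toLeft} ⊕ {x // x ∈ s.toRight} ≃ {x // x ∈ s} :=
  (Equiv.sumCongr (Equiv.subtypeEquivRight fun _ => Finset.mem_toLeft)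
    (Equiv.subtypeEquivRight fun _ => Finset.mem_toRight)).trans Equiv.subtypeSum.symm

/-- The embedding of `Sym(σ) × Sym(σ')` into `Sym(σ ∪ σ')`, for `σ` and `σ'` the parts of `s` in
the two summands. -/
def sumPermHom (s : Finset (α ⊕ β)) :
    Equiv.Perm {x // x ∈ s.toLeft} × Equiv.Perm {x // x ∈ s.toRight} →*
      Equiv.Perm {x // x ∈ s} :=
  (sumVertexEquiv s).permCongrHom.toMonoidHom.comp (Equiv.Perm.sumCongrHom _ _)

theorem sumPermHom_injective (s : Finset (α ⊕ β)) : Function.Injective (sumPermHom s) :=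
  (sumVertexEquiv s).permCongrHom.injective.comp Equiv.Perm.sumCongrHom_injective

theorem sumPermHom_eq_iff {π : Equiv.Perm {x // x ∈ s.toLeft}}
    {π' : Equiv.Perm {x // x ∈ s.toRight}} {ρ : Equiv.Perm {x // x ∈ s}} :
    sumPermHom s (π, π') = ρ ↔
      (∀ x, (ρ ⟨Sum.inl x.1, Finset.mem_toLeft.1 x.2⟩).1 = Sum.inl (π x).1) ∧
        ∀ x, (ρ ⟨Sum.inr x.1, Finset.mem_toRight.1 x.2⟩).1 = Sum.inr (π' x).1 := by
  constructor
  · rintro rfl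
    exact ⟨fun _ => rfl, fun _ => rfl⟩
  · rintro ⟨hl, hr⟩
    ext ⟨x | x, hx⟩ : 2
    · exact (hl ⟨x, Finset.mem_toLeft.2 hx⟩).symm
    · exact (hr ⟨x, Finset.mem_toRight.2 hx⟩).symm

end SumPerm

theorem projGroup_join_eq_map {Δ : ASC V} {Δ' : ASC V'} {s : Finset (V ⊕ V')}
    (hs : (Δ.join Δ').IsFacet s) :
    (Δ.join Δ').ProjGroup s =
      ((Δ.ProjGroup s.toLeft).prod (Δ'.ProjGroup s.toRight)).map (sumPermHom s) := by
  ext ρ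
  constructor
  · intro hρ
    obtain ⟨F, hF, hρF⟩ := (mem_projGroup_iff hs).1 hρ
    obtain ⟨f, f', hf, hf', rfl⟩ := hF.exists_eq_sumMap
    obtain ⟨π, hπ, hπf⟩ := hf.exists_mem_projGroup
    obtain ⟨π', hπ', hπf'⟩ := hf'.exists_mem_projGroup
    exact ⟨(π, π'), ⟨hπ, hπ'⟩, sumPermHom_eq_iff.2 (by simp [hρF, hπf, hπf'])⟩
  · rintro ⟨⟨π, π'⟩, ⟨hπ, hπ'⟩, hρ⟩
    obtain ⟨hρl, hρr⟩ := sumPermHom_eq_iff.1 hρ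
    obtain ⟨hl, hr⟩ := isFacet_join_iff.1 hs
    obtain ⟨f, hf, hπf⟩ := (mem_projGroup_iff hl).1 hπ
    obtain ⟨f', hf', hπf'⟩ := (mem_projGroup_iff hr).1 hπ'
    refine (mem_projGroup_iff hs).2
      ⟨Sum.map f f', by simpa only [Finset.toLeft_disjSum_toRight] using hf.join hf', ?_⟩
    rintro ⟨x | x, hx⟩
    · rw [hρl ⟨x, Finset.mem_toLeft.2 hx⟩, hπf, Sum.map_inl]
    · rw [hρr ⟨x, Finset.mem_toRight.2 hx⟩, hπf', Sum.map_inr]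

end ASC

theorem projGroup_join_general (Δ : ASC V) (Δ' : ASC V') (J : ASC (V ⊕ V'))
    (hJ : J.faces = {s | ∃ σ ∈ Δ.faces, ∃ σ' ∈ Δ'.faces,
      s = σ.image Sum.inl ∪ σ'.image Sum.inr})
    (σ0 : Finset V) (σ0' : Finset V') (h0 : Δ.IsFacet σ0) (h0' : Δ'.IsFacet σ0') :
    (∀ ρ : Equiv.Perm {x // x ∈ σ0.image Sum.inl ∪ σ0'.image Sum.inr},
      ρ ∈ J.ProjGroup (σ0.image Sum.inl ∪ σ0'.image Sum.inr) ↔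
        ((∀ x, (x.1.isLeft → (ρ x).1.isLeft) ∧ (x.1.isRight → (ρ x).1.isRight)) ∧
          (∃ π ∈ Δ.ProjGroup σ0, ∀ x : {x // x ∈ σ0},
            (ρ ⟨Sum.inl x.1, Finset.mem_union_left _ (Finset.mem_image_of_mem _ x.2)⟩).1 =
              Sum.inl (π x).1) ∧
          (∃ π' ∈ Δ'.ProjGroup σ0', ∀ x : {x // x ∈ σ0'},
            (ρ ⟨Sum.inr x.1, Finset.mem_union_right _ (Finset.mem_image_of_mem _ x.2)⟩).1 =
              Sum.inr (π' x).1))) ∧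
    Nonempty (↥(J.ProjGroup (σ0.image Sum.inl ∪ σ0'.image Sum.inr)) ≃*
      ↥(Δ.ProjGroup σ0) × ↥(Δ'.ProjGroup σ0')) := by
  obtain rfl := eq_join_of_faces_eq hJ
  -- The facet occurs in types, so it becomes a variable `s` before `σ0` and `σ0'` are replaced by
  -- its two parts.
  have hs := image_inl_union_image_inr σ0 σ0'
  generalize_proofs
  generalize σ0.image Sum.inl ∪ σ0'.image Sum.inr = s at *
  obtain ⟨rfl, rfl⟩ := Finset.eq_disjSum_iff.1 hs
  rw [projGroup_join_eq_map (isFacet_join_iff.2 ⟨h0, h0'⟩)]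
  refine ⟨fun ρ => ⟨?_, ?_⟩, ⟨?_⟩⟩
  · rintro ⟨⟨π, π'⟩, ⟨hπ, hπ'⟩, hρ⟩
    obtain ⟨hl, hr⟩ := sumPermHom_eq_iff.1 hρ
    refine ⟨?_, ⟨π, hπ, hl⟩, ⟨π', hπ', hr⟩⟩
    rintro ⟨x | x, hx⟩
    · simp [hl ⟨x, Finset.mem_toLeft.2 hx⟩]
    · simp [hr ⟨x, Finset.mem_toRight.2 hx⟩]
  · rintro ⟨-, ⟨π, hπ, hl⟩, ⟨π', hπ', hr⟩⟩
    exact ⟨(π, π'), ⟨hπ, hπ'⟩, sumPermHom_eq_iff.2 ⟨hl, hr⟩⟩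
  · exact (Subgroup.equivMapOfInjective _ _ (sumPermHom_injective s)).symm.trans
      (Subgroup.prodEquiv _ _)

/-- **Proposition (join)**: let `Δ`, `Δ'` be finite-dimensional simplicial complexes on
disjoint vertex sets (modelled as the two summands of `V ⊕ V'`), and let `J` be their join.
A permutation `ρ` of the facet `σ0 ∪ σ0'` of the join lies in `Π(J, σ0 ∪ σ0')` iff it
preserves `σ0` and `σ0'` and restricts on them to elements of `Π(Δ,σ0)` and `Π(Δ',σ0')`.
Consequently `Π(Δ*Δ', σ0 ∪ σ0') ≅ Π(Δ,σ0) × Π(Δ',σ0')`. -/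
theorem projGroup_join (Δ : ASC V) (Δ' : ASC V')
    (hdim : ∃ d : ℕ, ∀ σ ∈ Δ.faces, σ.card ≤ d + 1)
    (hdim' : ∃ d : ℕ, ∀ σ ∈ Δ'.faces, σ.card ≤ d + 1)
    (J : ASC (V ⊕ V'))
    (hJ : J.faces = {s | ∃ σ ∈ Δ.faces, ∃ σ' ∈ Δ'.faces,
      s = σ.image Sum.inl ∪ σ'.image Sum.inr})
    (σ0 : Finset V) (σ0' : Finset V') (h0 : Δ.IsFacet σ0) (h0' : Δ'.IsFacet σ0') :
    (∀ ρ : Equiv.Perm {x // x ∈ σ0.image Sum.inl ∪ σ0'.image Sum.inr},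
      ρ ∈ J.ProjGroup (σ0.image Sum.inl ∪ σ0'.image Sum.inr) ↔
        ((∀ x, (x.1.isLeft → (ρ x).1.isLeft) ∧ (x.1.isRight → (ρ x).1.isRight)) ∧
          (∃ π ∈ Δ.ProjGroup σ0, ∀ x : {x // x ∈ σ0},
            (ρ ⟨Sum.inl x.1, Finset.mem_union_left _ (Finset.mem_image_of_mem _ x.2)⟩).1 =
              Sum.inl (π x).1) ∧
          (∃ π' ∈ Δ'.ProjGroup σ0', ∀ x : {x // x ∈ σ0'},
            (ρ ⟨Sum.inr x.1, Finset.mem_union_right _ (Finset.mem_image_of_mem _ x.2)⟩).1 =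
              Sum.inr (π' x).1))) ∧
    Nonempty (↥(J.ProjGroup (σ0.image Sum.inl ∪ σ0'.image Sum.inr)) ≃*
      ↥(Δ.ProjGroup σ0) × ↥(Δ'.ProjGroup σ0')) :=
  projGroup_join_general Δ Δ' J hJ σ0 σ0' h0 h0'
end

section
/- Let Δ be a locally strongly connected abstract simplicial complex of finite dimension d and let σ0 be a facet of Δ. Then Δ is balanced if and only if the group of projectivities Π(Δ,σ0) is trivial. -/
open ASC

variable {V : Type*} [DecidableEq V]

/-- `Δ` is strongly connected: any two facets are joined by a facet path. -/
def StronglyConnected (Δ : ASC V) : Prop :=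
  ∀ σ τ : Finset V, Δ.IsFacet σ → Δ.IsFacet τ → ∃ L, Δ.IsFacetPath L σ τ

/-- `Δ` is locally strongly connected: it is strongly connected and the star of every
vertex is strongly connected (any two facets containing a vertex `v` are joined by a
facet path all of whose facets contain `v`). -/
def LocallyStronglyConnected (Δ : ASC V) : Prop :=
  StronglyConnected Δ ∧
    ∀ v : V, ({v} : Finset V) ∈ Δ.faces →
      ∀ σ τ : Finset V, Δ.IsFacet σ → Δ.IsFacet τ → v ∈ σ → v ∈ τ →
        ∃ L, Δ.IsFacetPath L σ τ ∧ ∀ s ∈ L, v ∈ s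

/-- A `d`-dimensional complex is balanced if its vertices admit a proper coloring with
`d + 1` colors. -/
def IsBalanced (Δ : ASC V) (d : ℕ) : Prop :=
  ∃ c : V → Fin (d + 1), ∀ x y : V, ({x, y} : Finset V) ∈ Δ.faces → x ≠ y → c x ≠ c y

/-!
Projectivities preserve any vertex coloring that restricts to a bijection from every facet onto a
common set of colors, since a perspectivity moves only one vertex and the remaining vertices of the
two facets already carry the same colors. A projectivity along a loop at `σ0` therefore fixes each
vertex of `σ0`. Conversely, if all these loops are trivial, the projectivity from a facet to `σ0`
does not depend on the facet path; by strong connectivity of vertex stars, the image of a vertex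
does not depend on the facet containing it either. The projectivities thus glue to a folding map of
`Δ` onto `σ0` that is bijective on every facet, and a coloring of the simplex `σ0` pulls back along
it.
-/

namespace ASC

section Perspectivity

variable {σ τ : Finset V} {x y : V}

theorem Adj.symm (h : Adj σ τ) : Adj τ σ :=
  ⟨h.1.symm, h.2.1.symm, (Finset.card_sdiff_comm h.2.1).symm.trans h.2.2⟩

theorem Adj.eq_of_mem_sdiff (h : Adj σ τ) (hx : x ∈ σ \ τ) (hy : y ∈ σ \ τ) : x = y :=
  Finset.card_le_one.mp h.2.2.le x hx y hy

theorem perspMap_of_mem (hx : x ∈ τ) : perspMap σ τ x = x := by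
  simp [perspMap, hx]

theorem Adj.perspMap_mem_sdiff (h : Adj σ τ) (hx : x ∈ σ \ τ) : perspMap σ τ x ∈ τ \ σ := by
  obtain ⟨y, hy⟩ := Finset.card_eq_one.mp h.symm.2.2
  simp only [perspMap, if_pos hx, hy, Finset.toList_singleton, List.head?_cons, Option.getD_some,
    Finset.mem_singleton]

theorem Adj.perspMap_mem (h : Adj σ τ) (hx : x ∈ σ) : perspMap σ τ x ∈ τ := by
  by_cases hxτ : x ∈ τ
  · rwa [perspMap_of_mem hxτ]
  · exact (Finset.mem_sdiff.mp (h.perspMap_mem_sdiff (Finset.mem_sdiff.mpr ⟨hx, hxτ⟩))).1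

theorem Adj.perspMap_perspMap (h : Adj σ τ) (hx : x ∈ σ) :
    perspMap τ σ (perspMap σ τ x) = x := by
  by_cases hxτ : x ∈ τ
  · rw [perspMap_of_mem hxτ, perspMap_of_mem hx]
  · have hxd : x ∈ σ \ τ := Finset.mem_sdiff.mpr ⟨hx, hxτ⟩
    exact h.eq_of_mem_sdiff (h.symm.perspMap_mem_sdiff (h.perspMap_mem_sdiff hxd)) hxd

theorem Adj.apply_perspMap_eq {C : Type*} {c : V → C} (h : Adj σ τ) (hc : Set.InjOn c σ)
    (hx : x ∈ σ) (hcx : c x ∈ c '' τ) : c (perspMap σ τ x) = c x := by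
  by_cases hxτ : x ∈ τ
  · rw [perspMap_of_mem hxτ]
  · obtain ⟨y, hyτ, hyx⟩ := hcx
    have hyσ : y ∉ σ := fun hyσ => hxτ (hc hyσ hx hyx ▸ hyτ)
    have hpersp : perspMap σ τ x = y :=
      h.symm.eq_of_mem_sdiff (h.perspMap_mem_sdiff (Finset.mem_sdiff.mpr ⟨hx, hxτ⟩))
        (Finset.mem_sdiff.mpr ⟨hyτ, hyσ⟩)
    rw [hpersp, hyx]

/-- The perspectivity `⟨σ, τ⟩` between adjacent facets, as a bijection of their vertex sets. -/
noncomputable def perspectivity (h : Adj σ τ) : σ ≃ τ where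
  toFun x := ⟨perspMap σ τ x, h.perspMap_mem x.2⟩
  invFun x := ⟨perspMap τ σ x, h.symm.perspMap_mem x.2⟩
  left_inv x := Subtype.ext (h.perspMap_perspMap x.2)
  right_inv x := Subtype.ext (h.symm.perspMap_perspMap x.2)

end Perspectivity

section Projectivity

/-- The dual graph `Γ(Δ)`: its nodes are the facets of `Δ`, joined by an edge when adjacent. -/
def dualGraph (Δ : ASC V) : SimpleGraph {σ // Δ.IsFacet σ} where
  Adj σ τ := Adj σ.1 τ.1
  symm := ⟨fun _ _ h => h.symm⟩
  loopless := ⟨fun _ h => h.1 rfl⟩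

/-- The projectivity along a facet path, the latter encoded as a walk in the dual graph. -/
noncomputable def projectivity {Δ : ASC V} {σ τ : {σ // Δ.IsFacet σ}} :
    Δ.dualGraph.Walk σ τ → (σ.1 ≃ τ.1)
  | .nil => Equiv.refl _
  | .cons h p => (perspectivity h).trans (projectivity p)

variable {Δ : ASC V} {σ τ ρ : {σ // Δ.IsFacet σ}}

theorem projectivity_append (p : Δ.dualGraph.Walk σ τ) (q : Δ.dualGraph.Walk τ ρ) :
    projectivity (p.append q) = (projectivity p).trans (projectivity q) := by
  induction p with
  | nil => rfl
  | cons h p ih =>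
    rw [SimpleGraph.Walk.cons_append, projectivity, ih, projectivity, Equiv.trans_assoc]

theorem projectivity_reverse (p : Δ.dualGraph.Walk σ τ) :
    projectivity p.reverse = (projectivity p).symm := by
  induction p with
  | nil => rfl
  | cons h p ih =>
    rw [SimpleGraph.Walk.reverse_cons, projectivity_append, ih]
    rfl

theorem coe_projectivity_apply (p : Δ.dualGraph.Walk σ τ) (x : σ.1) :
    (projectivity p x : V) = projMap (p.support.map Subtype.val) x := by
  induction p with
  | nil => rfl
  | cons h p ih =>
    rw [projectivity, Equiv.trans_apply, ih]
    cases p <;> rfl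

theorem coe_projectivity_apply_of_forall_mem_support {v : V} (p : Δ.dualGraph.Walk σ τ)
    (hv : ∀ ρ ∈ p.support, v ∈ ρ.1) :
    (projectivity p ⟨v, hv σ p.start_mem_support⟩ : V) = v := by
  induction p with
  | nil => rfl
  | cons h p ih =>
    have hp : ∀ ρ ∈ p.support, v ∈ ρ.1 := fun ρ hρ =>
      hv ρ (SimpleGraph.Walk.support_cons h p ▸ List.mem_cons_of_mem _ hρ)
    have hfix : perspectivity h ⟨v, hv _ (SimpleGraph.Walk.start_mem_support _)⟩ =
        ⟨v, hp _ p.start_mem_support⟩ :=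
      Subtype.ext (perspMap_of_mem (hp _ p.start_mem_support))
    rw [projectivity, Equiv.trans_apply, hfix, ih hp]

theorem apply_projectivity_of_bijOn {C : Type*} {c : V → C} {T : Set C}
    (hc : ∀ ρ, Δ.IsFacet ρ → Set.BijOn c ρ T) (p : Δ.dualGraph.Walk σ τ) (x : σ.1) :
    c (projectivity p x) = c x := by
  induction p with
  | nil => rfl
  | @cons σ ρ τ h p ih =>
    have hcx : c x ∈ c '' ρ.1 := (hc ρ ρ.2).surjOn ((hc σ σ.2).mapsTo x.2)
    exact (ih _).trans (h.apply_perspMap_eq (hc σ σ.2).injOn x.2 hcx)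

end Projectivity

section FacetPath

variable {Δ : ASC V}

theorem isFacetPath_support {σ τ : {σ // Δ.IsFacet σ}} (p : Δ.dualGraph.Walk σ τ) :
    Δ.IsFacetPath (p.support.map Subtype.val) σ τ := by
  refine ⟨mt List.map_eq_nil_iff.mp p.support_ne_nil, ?_, ?_, ?_, ?_⟩
  · rw [List.head?_map, List.head?_eq_some_head p.support_ne_nil, p.head_support, Option.map_some]
  · rw [List.getLast?_map, List.getLast?_eq_some_getLast p.support_ne_nil, p.getLast_support,
      Option.map_some]
  · exact List.forall_mem_map.mpr fun ρ _ => ρ.2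
  · exact (List.isChain_map _).mpr p.isChain_adj_support

theorem IsFacetPath.exists_walk {L : List (Finset V)} {σ τ : {σ // Δ.IsFacet σ}}
    (h : Δ.IsFacetPath L σ τ) :
    ∃ p : Δ.dualGraph.Walk σ τ, p.support.map Subtype.val = L := by
  obtain ⟨hne, hhead, hlast, hfacet, hchain⟩ := h
  lift L to List {σ // Δ.IsFacet σ} using hfacet
  replace hne : L ≠ [] := ne_of_apply_ne _ hne
  have hstart : L.head hne = σ := by
    simpa only [List.head?_map, List.head?_eq_some_head hne, Option.map_some, Option.some_inj,
      Subtype.coe_inj] using hhead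
  have hend : L.getLast hne = τ := by
    simpa only [List.getLast?_map, List.getLast?_eq_some_getLast hne, Option.map_some,
      Option.some_inj, Subtype.coe_inj] using hlast
  have hadj : L.IsChain Δ.dualGraph.Adj := (List.isChain_map Subtype.val).mp hchain
  refine ⟨(SimpleGraph.Walk.ofSupport L hne hadj).copy hstart hend, ?_⟩
  rw [SimpleGraph.Walk.support_copy, SimpleGraph.Walk.support_ofSupport]

theorem projGroup_eq_bot_iff {σ : {σ // Δ.IsFacet σ}} :
    Δ.ProjGroup σ = ⊥ ↔ ∀ p : Δ.dualGraph.Walk σ σ, projectivity p = Equiv.refl _ := by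
  rw [ProjGroup, Subgroup.closure_eq_bot_iff, Set.subset_singleton_iff]
  constructor
  · intro h p
    exact h _ ⟨_, isFacetPath_support p, coe_projectivity_apply p⟩
  · rintro h π ⟨L, hL, hπ⟩
    obtain ⟨p, rfl⟩ := hL.exists_walk
    have hπp : π = projectivity p :=
      Equiv.ext fun x => Subtype.ext ((hπ x).trans (coe_projectivity_apply p x).symm)
    rw [hπp, h p]
    rfl

theorem projectivity_eq_of_projGroup_eq_bot {σ τ : {σ // Δ.IsFacet σ}}
    (h : Δ.ProjGroup τ = ⊥) (p q : Δ.dualGraph.Walk σ τ) : projectivity p = projectivity q := by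
  have hloop := projGroup_eq_bot_iff.mp h (p.reverse.append q)
  rw [projectivity_append, projectivity_reverse] at hloop
  rw [← Equiv.trans_refl (projectivity p), ← hloop, ← Equiv.trans_assoc,
    Equiv.self_trans_symm, Equiv.refl_trans]

end FacetPath

section Connectivity

variable {Δ : ASC V}

theorem dualGraph_preconnected (h : StronglyConnected Δ) : Δ.dualGraph.Preconnected := by
  intro σ τ
  obtain ⟨_, hL⟩ := h σ τ σ.2 τ.2
  exact hL.exists_walk.nonempty

theorem IsFacet.card_eq_card {σ τ : Finset V} (hσ : Δ.IsFacet σ) (hτ : Δ.IsFacet τ)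
    (hsc : StronglyConnected Δ) : σ.card = τ.card := by
  obtain ⟨p⟩ := dualGraph_preconnected hsc ⟨σ, hσ⟩ ⟨τ, hτ⟩
  exact Finset.card_eq_of_equiv (projectivity p)

theorem exists_walk_forall_mem (h : LocallyStronglyConnected Δ) {v : V}
    {σ τ : {σ // Δ.IsFacet σ}} (hσ : v ∈ σ.1) (hτ : v ∈ τ.1) :
    ∃ p : Δ.dualGraph.Walk σ τ, ∀ ρ ∈ p.support, v ∈ ρ.1 := by
  have hv : {v} ∈ Δ.faces := Δ.down_closed σ.2.1 (Finset.singleton_subset_iff.mpr hσ)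
  obtain ⟨_, hL, hvL⟩ := h.2 v hv σ τ σ.2 τ.2 hσ hτ
  obtain ⟨p, rfl⟩ := hL.exists_walk
  exact ⟨p, fun ρ hρ => hvL ρ (List.mem_map_of_mem hρ)⟩

end Connectivity

section Facets

theorem exists_isFacet_superset {W : Type*} {Δ : ASC W} {n : ℕ} {σ : Finset W}
    (hn : ∀ τ ∈ Δ.faces, τ.card ≤ n) (hσ : σ ∈ Δ.faces) : ∃ τ, Δ.IsFacet τ ∧ σ ⊆ τ := by
  have hfin : (Finset.card '' {τ ∈ Δ.faces | σ ⊆ τ}).Finite :=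
    (Set.finite_Iic n).subset (Set.image_subset_iff.mpr fun τ hτ => hn τ hτ.1)
  obtain ⟨τ, ⟨hτ, hστ⟩, hmax⟩ :=
    Set.Finite.exists_maximalFor' Finset.card _ hfin ⟨σ, hσ, Finset.Subset.rfl⟩
  refine ⟨τ, ⟨hτ, fun ρ hρ hτρ => ?_⟩, hστ⟩
  exact Finset.eq_of_subset_of_card_le hτρ
    (hmax ⟨hρ, hστ.trans hτρ⟩ (Finset.card_le_card hτρ))

variable {Δ : ASC V} {n : ℕ} {σ : Finset V}

theorem IsFacet.card_eq (hσ : Δ.IsFacet σ) (hsc : StronglyConnected Δ)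
    (hdim : (∀ τ ∈ Δ.faces, τ.card ≤ n) ∧ ∃ τ ∈ Δ.faces, τ.card = n) : σ.card = n := by
  obtain ⟨hle, τ, hτ, hcard⟩ := hdim
  obtain ⟨ρ, hρ, hτρ⟩ := exists_isFacet_superset hle hτ
  rw [hσ.card_eq_card hρ hsc]
  exact (hle ρ hρ.1).antisymm (hcard ▸ Finset.card_le_card hτρ)

theorem isBalanced_iff_exists_injOn {d : ℕ} (hn : ∀ τ ∈ Δ.faces, τ.card ≤ n) :
    IsBalanced Δ d ↔ ∃ c : V → Fin (d + 1), ∀ τ, Δ.IsFacet τ → Set.InjOn c τ := by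
  refine exists_congr fun c => ⟨fun hc τ hτ x hx y hy hxy => ?_, fun hc x y hxy hne hcxy => ?_⟩
  · by_contra hne
    exact hc x y (Δ.down_closed hτ.1 (by simpa [Finset.insert_subset_iff] using ⟨hx, hy⟩)) hne hxy
  · obtain ⟨τ, hτ, hsub⟩ := exists_isFacet_superset hn hxy
    exact hne (hc τ hτ (hsub (by simp)) (hsub (by simp)) hcxy)

end Facets

section Folding

variable {Δ : ASC V} {σ0 : Finset V}

theorem projGroup_eq_bot_of_bijOn {C : Type*} {c : V → C} {T : Set C}
    (hc : ∀ τ, Δ.IsFacet τ → Set.BijOn c τ T) (hσ0 : Δ.IsFacet σ0) : Δ.ProjGroup σ0 = ⊥ := by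
  refine (projGroup_eq_bot_iff (σ := ⟨σ0, hσ0⟩)).mpr fun p => ?_
  ext x
  exact (hc σ0 hσ0).injOn (projectivity p x).2 x.2 (apply_projectivity_of_bijOn hc p x)

theorem projectivity_apply_eq_of_mem (hlsc : LocallyStronglyConnected Δ)
    {ρ σ τ : {σ // Δ.IsFacet σ}} (hρ : Δ.ProjGroup ρ = ⊥) (p : Δ.dualGraph.Walk σ ρ)
    (q : Δ.dualGraph.Walk τ ρ) {v : V} (hσ : v ∈ σ.1) (hτ : v ∈ τ.1) :
    projectivity p ⟨v, hσ⟩ = projectivity q ⟨v, hτ⟩ := by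
  obtain ⟨w, hw⟩ := exists_walk_forall_mem hlsc hσ hτ
  have hwv : projectivity w ⟨v, hσ⟩ = ⟨v, hτ⟩ :=
    Subtype.ext (coe_projectivity_apply_of_forall_mem_support w hw)
  rw [projectivity_eq_of_projGroup_eq_bot hρ p (w.append q), projectivity_append,
    Equiv.trans_apply, hwv]

theorem exists_bijOn_of_projGroup_eq_bot (hlsc : LocallyStronglyConnected Δ)
    (hσ0 : Δ.IsFacet σ0) (hbot : Δ.ProjGroup σ0 = ⊥) :
    ∃ r : V → V, ∀ τ, Δ.IsFacet τ → Set.BijOn r τ σ0 := by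
  have hwalk (τ : {σ // Δ.IsFacet σ}) : Nonempty (Δ.dualGraph.Walk τ ⟨σ0, hσ0⟩) :=
    dualGraph_preconnected hlsc.1 τ ⟨σ0, hσ0⟩
  have hglue (v : V) : ∃ w : V, ∀ (τ : {σ // Δ.IsFacet σ}) (hv : v ∈ τ.1)
      (p : Δ.dualGraph.Walk τ ⟨σ0, hσ0⟩), w = projectivity p ⟨v, hv⟩ := by
    by_cases hv : ∃ τ : {σ // Δ.IsFacet σ}, v ∈ τ.1
    · obtain ⟨τ, hvτ⟩ := hv
      obtain ⟨p⟩ := hwalk τ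
      exact ⟨projectivity p ⟨v, hvτ⟩, fun ρ hvρ q =>
        congrArg Subtype.val (projectivity_apply_eq_of_mem hlsc hbot p q hvτ hvρ)⟩
    · exact ⟨v, fun τ hvτ => absurd ⟨τ, hvτ⟩ hv⟩
  choose r hr using hglue
  refine ⟨r, fun τ hτ => ?_⟩
  obtain ⟨p⟩ := hwalk ⟨τ, hτ⟩
  have hrp : ∀ x : τ, r x = projectivity p x := fun x => hr x ⟨τ, hτ⟩ x.2 p
  refine ⟨fun x hx => ?_, fun x hx y hy hxy => ?_, fun y hy => ?_⟩
  · exact hrp ⟨x, hx⟩ ▸ (projectivity p ⟨x, hx⟩).2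
  · rw [hrp ⟨x, hx⟩, hrp ⟨y, hy⟩] at hxy
    exact congrArg Subtype.val ((projectivity p).injective (Subtype.ext hxy))
  · refine ⟨(projectivity p).symm ⟨y, hy⟩, Subtype.coe_prop _, ?_⟩
    rw [hrp, Equiv.apply_symm_apply]

end Folding

end ASC

/-- **Proposition (balanced)**: a locally strongly connected `d`-dimensional simplicial
complex is balanced iff its group of projectivities is trivial. -/
theorem balanced_iff_projGroup_trivial (Δ : ASC V) (d : ℕ)
    (hdim : (∀ σ ∈ Δ.faces, σ.card ≤ d + 1) ∧ ∃ σ ∈ Δ.faces, σ.card = d + 1)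
    (hlsc : LocallyStronglyConnected Δ)
    (σ0 : Finset V) (hσ0 : Δ.IsFacet σ0) :
    IsBalanced Δ d ↔ Δ.ProjGroup σ0 = ⊥ := by
  rw [isBalanced_iff_exists_injOn hdim.1]
  constructor
  · rintro ⟨c, hc⟩
    have hbij : ∀ τ, Δ.IsFacet τ → Set.BijOn c τ (Finset.univ : Finset (Fin (d + 1))) := by
      intro τ hτ
      have hcard : τ.card = d + 1 := hτ.card_eq hlsc.1 hdim
      have hmaps : Set.MapsTo c τ (Finset.univ : Finset (Fin (d + 1))) := by simp
      exact ⟨hmaps, hc τ hτ,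
        Finset.surjOn_of_injOn_of_card_le c hmaps (hc τ hτ) (by simp [hcard])⟩
    exact projGroup_eq_bot_of_bijOn hbij hσ0
  · intro hbot
    obtain ⟨r, hr⟩ := exists_bijOn_of_projGroup_eq_bot hlsc hσ0 hbot
    obtain ⟨e, -, he⟩ : ∃ e : V → Fin (d + 1), ↑σ0 ⊆ e ⁻¹' Set.univ ∧ Set.InjOn e σ0 :=
      σ0.finite_toSet.exists_injOn_of_encard_le (by simpa using mod_cast hdim.1 σ0 hσ0.1)
    exact ⟨e ∘ r, fun τ hτ => he.comp (hr τ hτ).injOn (hr τ hτ).mapsTo⟩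
end

section
/- Let d ≥ 1 and let Δ be the boundary complex of the d-simplex, i.e. the collection of all proper subsets of {0,1,…,d}. Then for every facet σ0 of Δ (a d-element subset of {0,…,d}) the group of projectivities Π(Δ,σ0) is the full symmetric group Sym(σ0); in particular Π(Δ,σ0) ≅ S_d. -/
open ASC

/-- The boundary complex of the `d`-simplex: the collection of all proper subsets of
`{0, 1, …, d}`. -/
def simplexBoundary (d : ℕ) : ASC (Fin (d + 1)) where
  faces := {s : Finset (Fin (d + 1)) | s ≠ Finset.univ}
  faces_nonempty := ⟨∅, by
    simp only [Set.mem_setOf_eq]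
    exact fun h => by simpa [← h] using Finset.mem_univ (0 : Fin (d + 1))⟩
  down_closed := by
    intro σ τ hσ hsub
    simp only [Set.mem_setOf_eq] at *
    intro h
    exact hσ (Finset.univ_subset_iff.mp (h ▸ hsub))

/-!
For facets obtained by deleting one vertex from a fixed set, the perspectivity from the facet
missing `v` to the facet missing `w` moves `w` to `v` and fixes everything else. Along the loop of
facets missing `v`, `a`, `b`, `v` in turn, `a` moves via `v` to `b`, while `b` moves to `a`: every
transposition is a projectivity, and transpositions generate the symmetric group.
-/

namespace ASC

section Perspectivities

variable {V : Type*} [DecidableEq V] {Δ : ASC V}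

theorem IsFacet.isFacetPath_singleton {σ : Finset V} (hσ : Δ.IsFacet σ) :
    Δ.IsFacetPath [σ] σ σ :=
  ⟨List.cons_ne_nil _ _, rfl, rfl, List.forall_mem_singleton.mpr hσ, List.isChain_singleton σ⟩

theorem IsFacetPath.cons {ρ σ τ : Finset V} {L : List (Finset V)} (hL : Δ.IsFacetPath L σ τ)
    (hρ : Δ.IsFacet ρ) (hρσ : Adj ρ σ) : Δ.IsFacetPath (ρ :: L) ρ τ := by
  obtain ⟨-, hhead, hlast, hfacet, hchain⟩ := hL
  obtain ⟨L', rfl⟩ := List.head?_eq_some_iff.mp hhead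
  exact ⟨List.cons_ne_nil _ _, rfl, hlast, List.forall_mem_cons.mpr ⟨hρ, hfacet⟩,
    List.isChain_cons_cons.mpr ⟨hρσ, hchain⟩⟩

theorem Represents.mem_projGroup {σ₀ : Finset V} {π : Equiv.Perm {x // x ∈ σ₀}}
    {L : List (Finset V)} (hπ : Represents σ₀ π L) (hL : Δ.IsFacetPath L σ₀ σ₀) :
    π ∈ Δ.ProjGroup σ₀ :=
  Subgroup.subset_closure ⟨L, hL, hπ⟩

theorem perspMap_eq_update {σ τ : Finset V} {v w : V} (hστ : σ \ τ = {v})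
    (hτσ : τ \ σ = {w}) : perspMap σ τ = Function.update id v w := by
  funext x
  simp [perspMap, hστ, hτσ, Function.update_apply]

end Perspectivities

section Erase

variable {V : Type*} [DecidableEq V] {τ : Finset V} {v w a b : V}

theorem adj_erase_erase (hv : v ∈ τ) (hw : w ∈ τ) (hvw : v ≠ w) :
    Adj (τ.erase v) (τ.erase w) := by
  refine ⟨(Finset.erase_injOn τ).ne hv hw hvw, ?_, ?_⟩
  · rw [Finset.card_erase_of_mem hv, Finset.card_erase_of_mem hw]
  · rw [Finset.erase_sdiff_erase hvw hw, Finset.card_singleton]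

theorem perspMap_erase_erase (hv : v ∈ τ) (hw : w ∈ τ) (hvw : v ≠ w) :
    perspMap (τ.erase v) (τ.erase w) = Function.update id w v :=
  perspMap_eq_update (Finset.erase_sdiff_erase hvw hw) (Finset.erase_sdiff_erase hvw.symm hv)

theorem projMap_erase_triangle (hv : v ∈ τ) (ha : a ∈ τ.erase v) (hb : b ∈ τ.erase v)
    (hab : a ≠ b) {x : V} (hx : x ≠ v) :
    projMap [τ.erase v, τ.erase a, τ.erase b, τ.erase v] x = Equiv.swap a b x := by
  obtain ⟨hav, ha⟩ := Finset.mem_erase.mp ha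
  obtain ⟨hbv, hb⟩ := Finset.mem_erase.mp hb
  simp only [projMap, perspMap_erase_erase hv ha hav.symm, perspMap_erase_erase ha hb hab,
    perspMap_erase_erase hb hv hbv, Function.comp_apply, id_eq]
  rcases eq_or_ne x a with rfl | hxa
  · simp [hbv.symm]
  rcases eq_or_ne x b with rfl | hxb
  · simp [hxa, hav]
  · simp [Equiv.swap_apply_of_ne_of_ne, hx, hxa, hxb]

theorem isFacetPath_erase_triangle {Δ : ASC V} (hΔ : ∀ u ∈ τ, Δ.IsFacet (τ.erase u))
    (hv : v ∈ τ) (ha : a ∈ τ.erase v) (hb : b ∈ τ.erase v) (hab : a ≠ b) :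
    Δ.IsFacetPath [τ.erase v, τ.erase a, τ.erase b, τ.erase v] (τ.erase v) (τ.erase v) := by
  obtain ⟨hav, ha⟩ := Finset.mem_erase.mp ha
  obtain ⟨hbv, hb⟩ := Finset.mem_erase.mp hb
  exact (((hΔ v hv).isFacetPath_singleton.cons (hΔ b hb) (adj_erase_erase hb hv hbv)).cons
    (hΔ a ha) (adj_erase_erase ha hb hab)).cons (hΔ v hv) (adj_erase_erase hv ha hav.symm)

theorem swap_mem_projGroup_erase {Δ : ASC V} (hΔ : ∀ u ∈ τ, Δ.IsFacet (τ.erase u))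
    (hv : v ∈ τ) {a b : {x // x ∈ τ.erase v}} (hab : a ≠ b) :
    Equiv.swap a b ∈ Δ.ProjGroup (τ.erase v) := by
  have hab' : (a : V) ≠ b := Subtype.coe_ne_coe.mpr hab
  refine Represents.mem_projGroup (fun x ↦ ?_)
    (isFacetPath_erase_triangle hΔ hv a.2 b.2 hab')
  rw [projMap_erase_triangle hv a.2 b.2 hab' (Finset.ne_of_mem_erase x.2),
    Subtype.val_injective.swap_apply]

theorem projGroup_erase_eq_top {Δ : ASC V} (hΔ : ∀ u ∈ τ, Δ.IsFacet (τ.erase u))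
    (hv : v ∈ τ) : Δ.ProjGroup (τ.erase v) = ⊤ := by
  rw [eq_top_iff, ← Equiv.Perm.closure_isSwap, Subgroup.closure_le]
  rintro _ ⟨a, b, hab, rfl⟩
  exact swap_mem_projGroup_erase hΔ hv hab

end Erase

end ASC

theorem isFacet_simplexBoundary_iff_isCoatom {d : ℕ} {σ : Finset (Fin (d + 1))} :
    (simplexBoundary d).IsFacet σ ↔ IsCoatom σ := by
  rw [isCoatom_iff_ge_of_le]
  exact and_congr_right' <| forall₂_congr fun τ _ ↦
    ⟨fun h hle ↦ (h hle).ge, fun h hle ↦ hle.antisymm (h hle)⟩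

theorem isFacet_simplexBoundary_iff {d : ℕ} {σ : Finset (Fin (d + 1))} :
    (simplexBoundary d).IsFacet σ ↔ ∃ v, σ = Finset.univ.erase v := by
  simp only [isFacet_simplexBoundary_iff_isCoatom, Finset.isCoatom_iff, Finset.compl_singleton]

theorem projGroup_simplexBoundary_general {V : Type*} [DecidableEq V] (Δ : ASC V) {d : ℕ}
    {τ : Finset V} (hτ : τ.card = d + 1) (hΔ : ∀ u ∈ τ, Δ.IsFacet (τ.erase u)) {v : V}
    (hv : v ∈ τ) :
    Δ.ProjGroup (τ.erase v) = ⊤ ∧ Nonempty (Δ.ProjGroup (τ.erase v) ≃* Equiv.Perm (Fin d)) := by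
  have htop : Δ.ProjGroup (τ.erase v) = ⊤ := projGroup_erase_eq_top hΔ hv
  have hcard : (τ.erase v).card = d := by rw [Finset.card_erase_of_mem hv, hτ, Nat.add_sub_cancel]
  exact ⟨htop, ⟨((MulEquiv.subgroupCongr htop).trans Subgroup.topEquiv).trans
    (Finset.equivFinOfCardEq hcard).permCongrHom⟩⟩

/-- **Corollary**: the group of projectivities of the boundary of the `d`-simplex at any
facet is the full symmetric group on that facet; in particular it is isomorphic to `S_d`. -/
theorem projGroup_simplexBoundary (d : ℕ) (hd : 1 ≤ d) (σ0 : Finset (Fin (d + 1)))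
    (hσ0 : (simplexBoundary d).IsFacet σ0) :
    (simplexBoundary d).ProjGroup σ0 = ⊤ ∧
      Nonempty (↥((simplexBoundary d).ProjGroup σ0) ≃* Equiv.Perm (Fin d)) := by
  obtain ⟨v, rfl⟩ := isFacet_simplexBoundary_iff.mp hσ0
  exact projGroup_simplexBoundary_general _ (Finset.card_fin _)
    (fun u _ ↦ isFacet_simplexBoundary_iff.mpr ⟨u, rfl⟩) (Finset.mem_univ v)
end

section
/- Let P be a simple d-polytope and let c be a coloring of the facets of P with d colors such that any two distinct facets sharing a vertex receive different colors. Then for every edge {v,w} of P one has c(F(v,w)) = c(F(w,v)), and assigning to each edge {v,w} this common color yields a proper edge coloring of the graph of P with d colors, i.e. any two distinct edges of P sharing a vertex receive different colors. -/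
/-- A (full-dimensional) convex `d`-polytope: the convex hull of a finite set of points in
`ℝ^d` with nonempty interior. -/
structure ConvPolytope (d : ℕ) where
  carrier : Set (EuclideanSpace ℝ (Fin d))
  isHull : ∃ s : Finset (EuclideanSpace ℝ (Fin d)), carrier = convexHull ℝ ↑s
  int_nonempty : (interior carrier).Nonempty

namespace ConvPolytope

variable {d : ℕ}

/-- A proper face of the polytope `P`: the intersection of `P` with a supporting
hyperplane. -/
def IsFace (P : ConvPolytope d) (F : Set (EuclideanSpace ℝ (Fin d))) : Prop :=
  ∃ (f : EuclideanSpace ℝ (Fin d) →L[ℝ] ℝ) (c : ℝ), f ≠ 0 ∧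
    (∀ x ∈ P.carrier, f x ≤ c) ∧ F = {x ∈ P.carrier | f x = c}

/-- The dimension of a subset of `ℝ^d`: the dimension of its affine span. -/
noncomputable def dimOf (F : Set (EuclideanSpace ℝ (Fin d))) : ℕ :=
  Module.finrank ℝ (affineSpan ℝ F).direction

/-- `v` is a vertex of `P` (a face of dimension 0). -/
def IsVertex (P : ConvPolytope d) (v : EuclideanSpace ℝ (Fin d)) : Prop :=
  P.IsFace {v}

/-- The vertices `v` and `w` are adjacent: they span an edge (1-dimensional face) of `P`. -/
def IsEdge (P : ConvPolytope d) (v w : EuclideanSpace ℝ (Fin d)) : Prop :=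
  v ≠ w ∧ P.IsFace (segment ℝ v w)

/-- A 2-face of `P`: a face of dimension 2. -/
def Is2Face (P : ConvPolytope d) (F : Set (EuclideanSpace ℝ (Fin d))) : Prop :=
  P.IsFace F ∧ dimOf F = 2

/-- A facet of `P`: a nonempty face of dimension `d - 1`. -/
def IsFacetOf (P : ConvPolytope d) (F : Set (EuclideanSpace ℝ (Fin d))) : Prop :=
  P.IsFace F ∧ F.Nonempty ∧ dimOf F = d - 1

/-- `P` is simple: every vertex lies in exactly `d` facets. -/
def IsSimple (P : ConvPolytope d) : Prop :=
  ∀ v, P.IsVertex v → {F | P.IsFacetOf F ∧ v ∈ F}.ncard = d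

/-- `P` is even: every 2-face of `P` has an even number of vertices. -/
def IsEven (P : ConvPolytope d) : Prop :=
  ∀ F, P.Is2Face F → Even {v | P.IsVertex v ∧ v ∈ F}.ncard

end ConvPolytope

open ConvPolytope

/-!
Let `P` be a polytope and `x ∈ P`. Dualising, `P` is cut out by finitely many facet inequalities: a
point outside `P` is separated from it by an extreme point of the polar dual. Hence a vector `y`
parallel to all facets through `x` can be added to `x` in small multiples of either sign without
leaving `P`, so `y` is parallel to every face containing `x`, and every face is an intersection of
facets.

Apply this to the midpoint of an edge `{v, w}`. At least `d - 1` facets contain it, since their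
directions meet in a line at most; in a simple polytope only `d` facets contain `v`, so at most one
of them misses `w`. The `d` facets at `v` carry all `d` colors, and the one colored like `F(w,v)`
cannot contain `w`, so it is `F(v,w)`. If two edges `{u, v}` and `{u, w}` leave the same facet, then
all other facets through `u` contain both edges, so each edge lies in the other.
-/

open Filter Set Topology
open scoped Pointwise

section LinearAlgebra

theorem exists_pos_forall_add_mul_le_and_sub_mul_le {ι : Type*} {S : Set ι} (hS : S.Finite)
    {a b c : ι → ℝ} (hle : ∀ i ∈ S, a i ≤ c i) (hslope : ∀ i ∈ S, a i = c i → b i = 0) :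
    ∃ ε > 0, ∀ i ∈ S, a i + ε * b i ≤ c i ∧ a i - ε * b i ≤ c i := by
  have hsmall : ∀ i ∈ S, ∀ᶠ ε : ℝ in 𝓝 0, a i + ε * b i ≤ c i ∧ a i - ε * b i ≤ c i := by
    intro i hi
    rcases (hle i hi).lt_or_eq with hlt | htight
    · have hadd : Tendsto (fun ε : ℝ => a i + ε * b i) (𝓝 0) (𝓝 (a i)) :=
        Continuous.tendsto' (by fun_prop) _ _ (by simp)
      have hsub : Tendsto (fun ε : ℝ => a i - ε * b i) (𝓝 0) (𝓝 (a i)) :=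
        Continuous.tendsto' (by fun_prop) _ _ (by simp)
      exact (hadd.eventually_le_const hlt).and (hsub.eventually_le_const hlt)
    · simp [htight, hslope i hi htight]
  have hall := ((eventually_all_finite hS).2 hsmall).filter_mono
    (nhdsWithin_le_nhds (s := Ioi (0 : ℝ)))
  obtain ⟨ε, hε, hεS⟩ := (eventually_mem_nhdsWithin.and hall).exists
  exact ⟨ε, hε, hεS⟩

theorem finrank_le_finrank_biInf_add_ncard {K V ι : Type*} [DivisionRing K] [AddCommGroup V]
    [Module K V] [FiniteDimensional K V] {S : Set ι} (hS : S.Finite) {W : ι → Submodule K V}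
    (hW : ∀ i ∈ S, Module.finrank K V ≤ Module.finrank K (W i) + 1) :
    Module.finrank K V ≤ Module.finrank K (⨅ i ∈ S, W i : Submodule K V) + S.ncard := by
  induction S, hS using Set.Finite.induction_on with
  | empty =>
    rw [iInf_emptyset, finrank_top]
    exact Nat.le_add_right _ _
  | @insert i S hi hS ih =>
    have hcodim := hW i (mem_insert i S)
    have hrest := ih fun j hj => hW j (mem_insert_of_mem i hj)
    have hsum := Submodule.finrank_sup_add_finrank_inf_eq (W i) (⨅ j ∈ S, W j)
    have hsup := Submodule.finrank_le (W i ⊔ ⨅ j ∈ S, W j)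
    rw [iInf_insert, ncard_insert_of_notMem hi hS]
    omega

theorem vectorSpan_le_ker_of_eq_const {R V N : Type*} [Ring R] [AddCommGroup V] [Module R V]
    [AddCommGroup N] [Module R N] {f : V →ₗ[R] N} {A : Set V} {c : N} (hf : ∀ x ∈ A, f x = c) :
    vectorSpan R A ≤ LinearMap.ker f := by
  rw [vectorSpan_def, Submodule.span_le]
  rintro _ ⟨x, hx, y, hy, rfl⟩
  simp [hf x hx, hf y hy]

theorem ker_le_vectorSpan_of_span_eq_top {R V : Type*} [Ring R] [AddCommGroup V] [Module R V]
    {f : V →ₗ[R] R} {A : Set V} (hne : A.Nonempty) (hf : ∀ x ∈ A, f x = 1)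
    (hA : Submodule.span R A = ⊤) : LinearMap.ker f ≤ vectorSpan R A := by
  obtain ⟨x₀, hx₀⟩ := hne
  have hproj : Submodule.span R A ≤
      (vectorSpan R A).comap (LinearMap.id - f.smulRight x₀) := by
    refine Submodule.span_le.2 fun x hx => ?_
    simpa [hf x hx] using vsub_mem_vectorSpan R hx hx₀
  intro y hy
  have hy' := hproj (hA ▸ Submodule.mem_top : y ∈ Submodule.span R A)
  simpa [LinearMap.mem_ker.1 hy] using hy'

end LinearAlgebra

section PolarDual

variable {V : Type*} [NormedAddCommGroup V] [NormedSpace ℝ V] {T : Set V}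

/-- The one-sided polar dual of `T`, that is `{f | f ≤ 1 on T}`; for `T` a polytope with the origin
in its interior, its extreme points are the normalised facet functionals of `T`. Mathlib's
`StrongDual.polar` is the two-sided variant `|f| ≤ 1`. -/
def polarDual (T : Set V) : Set (StrongDual ℝ V) :=
  {f | ∀ x ∈ T, f x ≤ 1}

theorem polarDual_convexHull (T : Set V) : polarDual (convexHull ℝ T) = polarDual T := by
  refine Subset.antisymm (fun f hf x hx => hf x (subset_convexHull ℝ T hx)) fun f hf => ?_
  exact fun x hx => convexHull_min hf (convex_halfSpace_le f.toLinearMap.isLinear 1) hx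

theorem isCompact_polarDual [FiniteDimensional ℝ V] (hT : T ∈ 𝓝 0) :
    IsCompact (polarDual T) := by
  have hclosed : IsClosed (polarDual T) := by
    simp only [polarDual, ofPred_forall]
    exact isClosed_biInter fun x _ => isClosed_le (by fun_prop) continuous_const
  have hsymm : T ∩ -T ∈ 𝓝 0 := inter_mem hT (by simpa using neg_mem_nhds_zero V hT)
  refine Metric.isCompact_of_isClosed_isBounded hclosed
    ((NormedSpace.isBounded_polar_of_mem_nhds_zero ℝ hsymm).subset fun f hf => ?_)
  rw [StrongDual.mem_polar_iff]
  rintro x ⟨hx, hnx⟩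
  have hneg : f (-x) ≤ 1 := hf _ hnx
  rw [map_neg] at hneg
  exact abs_le.2 ⟨by linarith, hf x hx⟩

theorem span_tight_eq_top_of_mem_extremePoints [FiniteDimensional ℝ V] (hT : T.Finite)
    {f : StrongDual ℝ V} (hf : f ∈ (polarDual T).extremePoints ℝ) :
    Submodule.span ℝ {x ∈ T | f x = 1} = ⊤ := by
  by_contra hspan
  obtain ⟨b, hb, hker⟩ := Submodule.exists_le_ker_of_lt_top _ (lt_top_iff_ne_top.2 hspan)
  obtain ⟨ε, hε, hεT⟩ := exists_pos_forall_add_mul_le_and_sub_mul_le hT hf.1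
    fun x hx hfx => LinearMap.mem_ker.1 (hker (Submodule.subset_span ⟨hx, hfx⟩))
  have hmid := mem_openSegment_add_sub (𝕜 := ℝ) f (ε • b.toContinuousLinearMap)
  have heq := hf.2 (fun x hx => (hεT x hx).1) (fun x hx => (hεT x hx).2) hmid
  simp [hε.ne', hb] at heq

theorem finite_extremePoints_polarDual [FiniteDimensional ℝ V] (hT : T.Finite) :
    ((polarDual T).extremePoints ℝ).Finite := by
  refine Finite.of_finite_image (f := fun f => {x ∈ T | f x = 1})
    (hT.finite_subsets.subset (image_subset_iff.2 fun f _ => sep_subset T _)) ?_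
  intro f hf g _ hfg
  have htight : ∀ x ∈ {x ∈ T | f x = 1}, f x = g x := fun x hx => by
    have hgx : x ∈ {x ∈ T | g x = 1} := (Set.ext_iff.1 hfg x).1 hx
    rw [hx.2, hgx.2]
  exact ContinuousLinearMap.coe_injective
    (LinearMap.ext_on (span_tight_eq_top_of_mem_extremePoints hT hf) htight)

theorem exists_mem_extremePoints_polarDual_one_lt [FiniteDimensional ℝ V]
    (hconv : Convex ℝ T) (hclosed : IsClosed T) (hT : T ∈ 𝓝 0) {z : V} (hz : z ∉ T) :
    ∃ f ∈ (polarDual T).extremePoints ℝ, 1 < f z := by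
  obtain ⟨g, u, hgT, hgz⟩ := geometric_hahn_banach_closed_point hconv hclosed hz
  have hu : 0 < u := by simpa using hgT 0 (mem_of_mem_nhds hT)
  have hg : u⁻¹ • g ∈ polarDual T := fun x hx => by
    simpa [inv_mul_le_iff₀ hu] using (hgT x hx).le
  have hgz' : 1 < (u⁻¹ • g) z := by simpa [lt_inv_mul_iff₀ hu] using hgz
  let pairing : StrongDual ℝ (StrongDual ℝ V) := ContinuousLinearMap.apply ℝ ℝ z
  have hexposed : IsExposed ℝ (polarDual T) (pairing.toExposed (polarDual T)) :=
    ContinuousLinearMap.toExposed.isExposed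
  have hcompact := isCompact_polarDual hT
  obtain ⟨m, hm, hmax⟩ := hcompact.exists_isMaxOn ⟨_, hg⟩ pairing.continuous.continuousOn
  obtain ⟨f, hf⟩ := (hexposed.isCompact hcompact).extremePoints_nonempty ⟨m, hm, hmax⟩
  exact ⟨f, hexposed.isExtreme.extremePoints_subset_extremePoints hf,
    hgz'.trans_le (hf.1.2 _ hg)⟩

end PolarDual

section ExtremePoints

variable {V : Type*} [AddCommGroup V] [Module ℝ V]

theorem left_mem_extremePoints_segment (v w : V) : v ∈ (segment ℝ v w).extremePoints ℝ := by
  rcases eq_or_ne w v with rfl | hwv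
  · simp
  refine ⟨left_mem_segment ℝ v w, ?_⟩
  simp only [segment_eq_image']
  rintro _ ⟨s, ⟨hs, -⟩, rfl⟩ _ ⟨t, ⟨ht, -⟩, rfl⟩ ⟨a, b, ha, hb, hab, hcomb⟩
  have hzero : (a * s + b * t) • (w - v) = 0 := by
    linear_combination (norm := module) hcomb - hab • v
  have hst : a * s + b * t = 0 := (smul_eq_zero.1 hzero).resolve_right (sub_ne_zero.2 hwv)
  obtain rfl : s = 0 := by nlinarith [mul_nonneg ha.le hs, mul_nonneg hb.le ht]
  simp

variable [TopologicalSpace V] [IsTopologicalAddGroup V] [ContinuousSMul ℝ V]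
  [LocallyConvexSpace ℝ V] [T2Space V]

theorem extremePoints_convexHull_subset_exposedPoints {s : Set V} (hs : s.Finite) :
    (convexHull ℝ s).extremePoints ℝ ⊆ (convexHull ℝ s).exposedPoints ℝ := by
  intro v hv
  have hnotMem : v ∉ convexHull ℝ (s \ {v}) := fun h =>
    (convexHull_min (sdiff_subset_sdiff_left (subset_convexHull ℝ s))
      ((convex_convexHull ℝ s).mem_extremePoints_iff_convex_sdiff.1 hv).2 h).2 rfl
  obtain ⟨f, u, hlt, hu⟩ := geometric_hahn_banach_closed_point (convex_convexHull ℝ (s \ {v}))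
    (hs.sdiff.isClosed_convexHull ℝ) hnotMem
  have hother : ∀ x ∈ s, x ≠ v → f x < f v := fun x hx hxv =>
    (hlt x (subset_convexHull ℝ _ ⟨hx, hxv⟩)).trans hu
  have hmaxOn : ∀ x ∈ s, f x ≤ f v := fun x hx => by
    rcases eq_or_ne x v with rfl | hxv
    exacts [le_rfl, (hother x hx hxv).le]
  have hmax : ∀ x ∈ convexHull ℝ s, f x ≤ f v :=
    convexHull_min hmaxOn (convex_halfSpace_le f.toLinearMap.isLinear _)
  -- The face where `f` is maximal is `{v}` by Krein-Milman: it has no other extreme point.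
  have hK : IsExposed ℝ (convexHull ℝ s) (f.toExposed (convexHull ℝ s)) :=
    ContinuousLinearMap.toExposed.isExposed
  have hextreme : (f.toExposed (convexHull ℝ s)).extremePoints ℝ ⊆ {v} := fun x hx => by
    by_contra hxv
    have hxs := extremePoints_convexHull_subset (hK.isExtreme.extremePoints_subset_extremePoints hx)
    exact (hother x hxs hxv).not_ge (hx.1.2 v hv.1)
  have hsubset : f.toExposed (convexHull ℝ s) ⊆ {v} := by
    rw [← closure_convexHull_extremePoints (hK.isCompact (hs.isCompact_convexHull ℝ))
      (hK.convex (convex_convexHull ℝ s))]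
    exact closure_minimal (convexHull_min hextreme (convex_singleton v)) isClosed_singleton
  exact ⟨hv.1, f, fun y hy => ⟨hmax y hy, fun hvy =>
    hsubset ⟨hy, fun x hx => (hmax x hx).trans hvy⟩⟩⟩

end ExtremePoints

namespace ConvPolytope

variable {d : ℕ} {P : ConvPolytope d} {F G K : Set (EuclideanSpace ℝ (Fin d))}
  {u v w x z : EuclideanSpace ℝ (Fin d)}

section Faces

theorem IsFace.subset (hF : P.IsFace F) : F ⊆ P.carrier := by
  obtain ⟨f, c, -, -, rfl⟩ := hF
  exact sep_subset _ _

theorem IsFace.isExposed (hF : P.IsFace F) : IsExposed ℝ P.carrier F := by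
  obtain ⟨f, c, -, hle, rfl⟩ := hF
  rintro ⟨x, hx, hfx⟩
  refine ⟨f, Set.ext fun y => and_congr_right fun hy => ⟨fun hfy z hz => ?_, fun hmax => ?_⟩⟩
  · exact hfy ▸ hle z hz
  · exact (hle y hy).antisymm (hfx ▸ hmax x hx)

theorem IsFace.mem_of_sub_mem_vectorSpan (hF : P.IsFace F) (hx : x ∈ F) (hz : z ∈ P.carrier)
    (hzx : z - x ∈ vectorSpan ℝ F) : z ∈ F := by
  obtain ⟨f, c, -, -, rfl⟩ := hF
  have hker : f (z - x) = 0 :=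
    vectorSpan_le_ker_of_eq_const (f := f.toLinearMap) (fun _ hy => hy.2) hzx
  rw [map_sub, sub_eq_zero] at hker
  exact ⟨hz, hker.trans hx.2⟩

theorem isVertex_of_mem_exposedPoints (hv : v ∈ P.carrier.exposedPoints ℝ) (hw : w ∈ P.carrier)
    (hvw : v ≠ w) : P.IsVertex v := by
  obtain ⟨hvP, f, hf⟩ := hv
  refine ⟨f, f v, ?_, fun x hx => (hf x hx).1, Set.ext fun x => ?_⟩
  · rintro rfl
    exact hvw ((hf w hw).2 le_rfl).symm
  · exact ⟨by rintro rfl; exact ⟨hvP, rfl⟩, fun hx => (hf x hx.1).2 hx.2.ge⟩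

end Faces

section FacetInequalities

theorem isFacetOf_of_span_sub_eq_top {f : StrongDual ℝ (EuclideanSpace ℝ (Fin d))} (hf : f ≠ 0)
    {p : EuclideanSpace ℝ (Fin d)} (hle : ∀ y ∈ P.carrier, f y ≤ f p + 1)
    (hspan : Submodule.span ℝ {t | p + t ∈ P.carrier ∧ f t = 1} = ⊤) :
    P.IsFacetOf {y ∈ P.carrier | f y = f p + 1} := by
  set A : Set (EuclideanSpace ℝ (Fin d)) := {t | p + t ∈ P.carrier ∧ f t = 1}
  have hface : {y ∈ P.carrier | f y = f p + 1} = p +ᵥ A := by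
    ext y
    simp only [A, mem_vadd_set_iff_neg_vadd_mem, vadd_eq_add, mem_ofPred_eq, add_neg_cancel_left,
      map_add, map_neg, neg_add_eq_iff_eq_add]
  have hf' : f.toLinearMap ≠ 0 := fun h => hf (ContinuousLinearMap.coe_injective h)
  have hne : A.Nonempty := by
    rw [nonempty_iff_ne_empty]
    intro hempty
    rw [hempty, Submodule.span_empty] at hspan
    exact hf' (LinearMap.ext fun y => by
      rw [(Submodule.mem_bot ℝ).1 (hspan ▸ Submodule.mem_top : y ∈ ⊥)]; simp)
  have hdir : vectorSpan ℝ A = LinearMap.ker f.toLinearMap :=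
    (vectorSpan_le_ker_of_eq_const fun t ht => ht.2).antisymm
      (ker_le_vectorSpan_of_span_eq_top hne (fun t ht => ht.2) hspan)
  have hker := Module.Dual.finrank_ker_add_one_of_ne_zero hf'
  rw [finrank_euclideanSpace_fin] at hker
  refine ⟨⟨f, f p + 1, hf, hle, rfl⟩, hface ▸ hne.vadd_set, ?_⟩
  rw [dimOf, hface, direction_affineSpan, vectorSpan_vadd, hdir]
  omega

theorem exists_finite_facet_inequalities (P : ConvPolytope d) :
    ∃ H : Set (StrongDual ℝ (EuclideanSpace ℝ (Fin d)) × ℝ), H.Finite ∧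
      P.carrier = {z | ∀ h ∈ H, h.1 z ≤ h.2} ∧
      ∀ h ∈ H, P.IsFacetOf {y ∈ P.carrier | h.1 y = h.2} := by
  obtain ⟨s, hs⟩ := P.isHull
  obtain ⟨p, hp⟩ := P.int_nonempty
  let T : Set (EuclideanSpace ℝ (Fin d)) := -p +ᵥ (s : Set (EuclideanSpace ℝ (Fin d)))
  have hT : T.Finite := s.finite_toSet.vadd_set
  have hhull : ∀ z, z - p ∈ convexHull ℝ T ↔ z ∈ P.carrier := fun z => by
    rw [convexHull_vadd, hs, mem_vadd_set_iff_neg_vadd_mem]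
    simp
  have hnhds : convexHull ℝ T ∈ 𝓝 0 := by
    have hcont : Tendsto (fun t => t + p) (𝓝 0) (𝓝 p) :=
      Continuous.tendsto' (by fun_prop) _ _ (zero_add p)
    filter_upwards [hcont (mem_interior_iff_mem_nhds.1 hp)] with t ht
    simpa using (hhull (t + p)).2 ht
  let V := (polarDual T).extremePoints ℝ \ {0}
  have hV : ∀ f ∈ V, ∀ y ∈ P.carrier, f y ≤ f p + 1 := fun f hf y hy => by
    have hpolar : f ∈ polarDual (convexHull ℝ T) := polarDual_convexHull T ▸ hf.1.1
    have hle := hpolar _ ((hhull y).2 hy)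
    rw [map_sub] at hle
    linarith
  refine ⟨(fun f => (f, f p + 1)) '' V, (finite_extremePoints_polarDual hT).sdiff.image _,
    Subset.antisymm ?_ ?_, ?_⟩
  · rintro y hy _ ⟨f, hf, rfl⟩
    exact hV f hf y hy
  · intro z hz
    by_contra hzP
    obtain ⟨f, hf, hfz⟩ := exists_mem_extremePoints_polarDual_one_lt (convex_convexHull ℝ T)
      (hT.isClosed_convexHull ℝ) hnhds (mt (hhull z).1 hzP)
    rw [polarDual_convexHull] at hf
    have hf0 : f ≠ 0 := by
      rintro rfl
      exact absurd hfz (by simp)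
    have hle : f z ≤ f p + 1 := hz _ ⟨f, ⟨hf, hf0⟩, rfl⟩
    rw [map_sub] at hfz
    linarith
  · rintro _ ⟨f, hf, rfl⟩
    refine isFacetOf_of_span_sub_eq_top hf.2 (hV f hf) (top_unique ?_)
    rw [← span_tight_eq_top_of_mem_extremePoints hT hf.1]
    refine Submodule.span_mono fun t ht => ⟨(hhull _).1 ?_, ht.2⟩
    simpa using subset_convexHull ℝ T ht.1

end FacetInequalities

section FacetDirections

/-- The facets of `P` containing the point `x`. -/
def facetsAt (P : ConvPolytope d) (x : EuclideanSpace ℝ (Fin d)) :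
    Set (Set (EuclideanSpace ℝ (Fin d))) :=
  {F | P.IsFacetOf F ∧ x ∈ F}

/-- The vectors parallel to every facet through `x`; for `x ∈ P` this is the direction of the
smallest face containing `x`. -/
noncomputable def facetDirection (P : ConvPolytope d) (x : EuclideanSpace ℝ (Fin d)) :
    Submodule ℝ (EuclideanSpace ℝ (Fin d)) :=
  ⨅ F ∈ P.facetsAt x, vectorSpan ℝ F

theorem exists_pos_add_smul_mem_and_sub_smul_mem (hx : x ∈ P.carrier)
    {y : EuclideanSpace ℝ (Fin d)} (hy : y ∈ P.facetDirection x) :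
    ∃ ε : ℝ, 0 < ε ∧ x + ε • y ∈ P.carrier ∧ x - ε • y ∈ P.carrier := by
  simp only [facetDirection, Submodule.mem_iInf] at hy
  obtain ⟨H, hH, hcarrier, hfacet⟩ := P.exists_finite_facet_inequalities
  have hslope : ∀ h ∈ H, h.1 x = h.2 → h.1 y = 0 := fun h hh htight => by
    have hyF : y ∈ vectorSpan ℝ {z ∈ P.carrier | h.1 z = h.2} :=
      hy _ ⟨hfacet h hh, hx, htight⟩
    exact vectorSpan_le_ker_of_eq_const (f := h.1.toLinearMap) (fun _ hz => hz.2) hyF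
  have hle : ∀ h ∈ H, h.1 x ≤ h.2 := by rwa [hcarrier] at hx
  obtain ⟨ε, hε, hεH⟩ := exists_pos_forall_add_mul_le_and_sub_mul_le hH hle hslope
  rw [hcarrier]
  exact ⟨ε, hε, fun h hh => by simpa using (hεH h hh).1, fun h hh => by simpa using (hεH h hh).2⟩

theorem facetDirection_le_vectorSpan (hK : IsExtreme ℝ P.carrier K) (hx : x ∈ K) :
    P.facetDirection x ≤ vectorSpan ℝ K := by
  intro y hy
  obtain ⟨ε, hε, hadd, hsub⟩ := exists_pos_add_smul_mem_and_sub_smul_mem (hK.1 hx) hy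
  have haddK : x + ε • y ∈ K :=
    hK.2 hadd hsub hx (mem_openSegment_add_sub x (ε • y))
  have hdir : ε • y ∈ vectorSpan ℝ K := by simpa using vsub_mem_vectorSpan ℝ haddK hx
  exact (Submodule.smul_mem_iff _ hε.ne').1 hdir

theorem IsFace.mem_of_facetsAt_subset (hK : P.IsFace K) (hx : x ∈ K) (hz : z ∈ P.carrier)
    (hxz : P.facetsAt x ⊆ P.facetsAt z) : z ∈ K := by
  have hdir : z - x ∈ P.facetDirection x := by
    simp only [facetDirection, Submodule.mem_iInf]
    exact fun F hF => vsub_mem_vectorSpan ℝ (hxz hF).2 hF.2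
  exact hK.mem_of_sub_mem_vectorSpan hx hz
    (facetDirection_le_vectorSpan hK.isExposed.isExtreme hx hdir)

theorem dim_le_finrank_facetDirection_add_ncard (hx : (P.facetsAt x).Finite) :
    d ≤ Module.finrank ℝ (P.facetDirection x) + (P.facetsAt x).ncard := by
  have hcodim : ∀ F ∈ P.facetsAt x, Module.finrank ℝ (EuclideanSpace ℝ (Fin d)) ≤
      Module.finrank ℝ (vectorSpan ℝ F) + 1 := fun F hF => by
    have hdim : Module.finrank ℝ (vectorSpan ℝ F) = d - 1 := by
      rw [← direction_affineSpan]
      exact hF.1.2.2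
    rw [finrank_euclideanSpace_fin]
    omega
  have hcount := finrank_le_finrank_biInf_add_ncard hx hcodim
  rwa [finrank_euclideanSpace_fin] at hcount

end FacetDirections

section Edges

theorem IsEdge.symm (h : P.IsEdge v w) : P.IsEdge w v :=
  ⟨h.1.symm, segment_symm ℝ v w ▸ h.2⟩

theorem IsEdge.left_mem_carrier (h : P.IsEdge v w) : v ∈ P.carrier :=
  h.2.subset (left_mem_segment ℝ v w)

theorem IsEdge.isVertex_left (h : P.IsEdge v w) : P.IsVertex v := by
  obtain ⟨s, hs⟩ := P.isHull
  have hextreme : v ∈ P.carrier.extremePoints ℝ :=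
    h.2.isExposed.isExtreme.extremePoints_subset_extremePoints (left_mem_extremePoints_segment v w)
  refine isVertex_of_mem_exposedPoints ?_ h.symm.left_mem_carrier h.1
  rw [hs] at hextreme ⊢
  exact extremePoints_convexHull_subset_exposedPoints s.finite_toSet hextreme

theorem facetsAt_midpoint_subset (hv : v ∈ P.carrier) (hw : w ∈ P.carrier) :
    P.facetsAt (midpoint ℝ v w) ⊆ P.facetsAt v ∩ P.facetsAt w := by
  rintro F ⟨hF, hmid⟩
  have hextreme := hF.1.isExposed.isExtreme
  have hmid' := midpoint_mem_openSegment (𝕜 := ℝ) v w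
  exact ⟨⟨hF, hextreme.2 hv hw hmid hmid'⟩,
    ⟨hF, hextreme.right_mem_of_mem_openSegment hv hw hmid hmid'⟩⟩

theorem IsEdge.finrank_facetDirection_midpoint_le_one (h : P.IsEdge v w) :
    Module.finrank ℝ (P.facetDirection (midpoint ℝ v w)) ≤ 1 := by
  have hle := facetDirection_le_vectorSpan h.2.isExposed.isExtreme (midpoint_mem_segment v w)
  rw [vectorSpan_segment, ← vectorSpan_pair_rev] at hle
  exact (Submodule.finrank_mono hle).trans (collinear_pair ℝ v w).finrank_le_one

theorem IsSimple.ncard_facetsAt_left (hP : P.IsSimple) (h : P.IsEdge v w) :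
    (P.facetsAt v).ncard = d :=
  hP v h.isVertex_left

theorem IsSimple.finite_facetsAt_left (hP : P.IsSimple) (h : P.IsEdge v w) :
    (P.facetsAt v).Finite := by
  have hd : d ≠ 0 := by
    rintro rfl
    exact h.1 (Subsingleton.elim v w)
  exact finite_of_ncard_ne_zero ((hP.ncard_facetsAt_left h).trans_ne hd)

theorem IsSimple.eq_of_mem_facetsAt_of_notMem (hP : P.IsSimple) (h : P.IsEdge v w)
    (hF : F ∈ P.facetsAt v) (hwF : w ∉ F) (hG : G ∈ P.facetsAt v) (hwG : w ∉ G) : F = G := by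
  by_contra hFG
  have hfin := hP.finite_facetsAt_left h
  have hsub : P.facetsAt (midpoint ℝ v w) ⊆ P.facetsAt v \ {F, G} := fun K hK => by
    obtain ⟨hvK, hwK⟩ := facetsAt_midpoint_subset h.left_mem_carrier h.symm.left_mem_carrier hK
    refine ⟨hvK, ?_⟩
    rintro (rfl | rfl)
    exacts [hwF hwK.2, hwG hwK.2]
  have hcard := ncard_sdiff_add_ncard_of_subset (pair_subset hF hG) hfin
  rw [ncard_pair hFG, hP.ncard_facetsAt_left h] at hcard
  have hlow := dim_le_finrank_facetDirection_add_ncard (hfin.sdiff.subset hsub)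
  have hline := h.finrank_facetDirection_midpoint_le_one
  have hupp := ncard_le_ncard hsub hfin.sdiff
  omega

theorem IsSimple.mem_segment_of_notMem (hP : P.IsSimple) (hv : P.IsEdge u v) (hw : P.IsEdge u w)
    (hF : F ∈ P.facetsAt u) (hvF : v ∉ F) (hwF : w ∉ F) : w ∈ segment ℝ u v := by
  have huP := hv.left_mem_carrier
  have hwP := hw.symm.left_mem_carrier
  refine hv.2.mem_of_facetsAt_subset (midpoint_mem_segment u v) hwP fun K hK => ⟨hK.1, ?_⟩
  obtain ⟨huK, hvK⟩ := facetsAt_midpoint_subset huP hv.symm.left_mem_carrier hK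
  by_contra hwK
  exact hvF (hP.eq_of_mem_facetsAt_of_notMem hw hF hwF huK hwK ▸ hvK.2)

theorem IsSimple.eq_of_isEdge_of_notMem (hP : P.IsSimple) (hv : P.IsEdge u v)
    (hw : P.IsEdge u w) (hF : F ∈ P.facetsAt u) (hvF : v ∉ F) (hwF : w ∉ F) : v = w := by
  have hwv := mem_segment_iff_wbtw.1 (hP.mem_segment_of_notMem hv hw hF hvF hwF)
  have hvw := mem_segment_iff_wbtw.1 (hP.mem_segment_of_notMem hw hv hF hwF hvF)
  exact (wbtw_swap_right_iff ℝ u).1 ⟨hvw, hwv⟩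

end Edges

section Colorings

variable {α : Type*} {c : Set (EuclideanSpace ℝ (Fin d)) → α}

/-- A proper coloring of the facets of `P`: distinct facets with a common vertex get distinct
colors. The values of `c` on sets that are not facets are irrelevant. -/
def IsFacetColoring (P : ConvPolytope d) (c : Set (EuclideanSpace ℝ (Fin d)) → α) : Prop :=
  ∀ F G, P.IsFacetOf F → P.IsFacetOf G → F ≠ G →
    (∃ u, P.IsVertex u ∧ u ∈ F ∩ G) → c F ≠ c G

theorem IsFacetColoring.injOn_facetsAt (hc : P.IsFacetColoring c) (hv : P.IsVertex v) :
    InjOn c (P.facetsAt v) := fun F hF G hG hFG => by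
  by_contra hne
  exact hc F G hF.1 hG.1 hne ⟨v, hv, hF.2, hG.2⟩ hFG

theorem IsFacetColoring.surjOn_facetsAt [Finite α] (hα : Nat.card α ≤ d)
    (hc : P.IsFacetColoring c) (hP : P.IsSimple) (hv : P.IsVertex v) :
    SurjOn c (P.facetsAt v) univ := by
  refine (eq_of_subset_of_ncard_le (subset_univ _) ?_).ge
  rw [ncard_univ, (hc.injOn_facetsAt hv).ncard_image]
  exact hα.trans_eq (hP v hv).symm

theorem IsFacetColoring.eq_of_isEdge [Finite α] (hα : Nat.card α ≤ d)
    (hc : P.IsFacetColoring c) (hP : P.IsSimple) (h : P.IsEdge v w)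
    (hF : F ∈ P.facetsAt v) (hwF : w ∉ F) (hG : G ∈ P.facetsAt w) (hvG : v ∉ G) : c F = c G := by
  obtain ⟨K, hK, hKG⟩ := hc.surjOn_facetsAt hα hP h.isVertex_left (mem_univ (c G))
  have hwK : w ∉ K := fun hwK => by
    have hKG' := hc.injOn_facetsAt h.symm.isVertex_left ⟨hK.1, hwK⟩ hG hKG
    exact hvG (hKG' ▸ hK.2)
  rw [hP.eq_of_mem_facetsAt_of_notMem h hF hwF hK hwK, hKG]

theorem IsFacetColoring.ne_of_isEdge (hc : P.IsFacetColoring c) (hP : P.IsSimple) (hvw : v ≠ w)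
    (hv : P.IsEdge u v) (hw : P.IsEdge u w) (hF : F ∈ P.facetsAt u) (hvF : v ∉ F)
    (hG : G ∈ P.facetsAt u) (hwG : w ∉ G) : c F ≠ c G := fun hFG => by
  obtain rfl := hc.injOn_facetsAt hv.isVertex_left hF hG hFG
  exact hvw (hP.eq_of_isEdge_of_notMem hv hw hF hvF hwG)

end Colorings

end ConvPolytope

/-- **Proposition (edge coloring)**: let `P` be a simple `d`-polytope and `c` a proper
`d`-coloring of the facets of `P` (distinct facets sharing a vertex get distinct colors).
Then for every edge `{v,w}` the facets `F(v,w)` and `F(w,v)` get the same color, and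
assigning this common color to the edge yields a proper edge coloring of the
vertex-edge-graph of `P` with `d` colors: two distinct edges sharing a vertex `u` receive
distinct colors. -/
theorem facet_coloring_induces_edge_coloring (d : ℕ) (P : ConvPolytope d)
    (hsimple : P.IsSimple) (c : Set (EuclideanSpace ℝ (Fin d)) → Fin d)
    (hc : ∀ F G, P.IsFacetOf F → P.IsFacetOf G → F ≠ G →
      (∃ u, P.IsVertex u ∧ u ∈ F ∩ G) → c F ≠ c G) :
    (∀ v w, P.IsEdge v w →
      ∀ F G, P.IsFacetOf F → v ∈ F → w ∉ F → P.IsFacetOf G → w ∈ G → v ∉ G →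
        c F = c G) ∧
    (∀ u v w, v ≠ w → P.IsEdge u v → P.IsEdge u w →
      ∀ F G, P.IsFacetOf F → u ∈ F → v ∉ F → P.IsFacetOf G → u ∈ G → w ∉ G →
        c F ≠ c G) := by
  have hcol : P.IsFacetColoring c := hc
  refine ⟨fun v w hvw F G hF hvF hwF hG hwG hvG => ?_,
    fun u v w hne huv huw F G hF huF hvF hG huG hwG => ?_⟩
  · exact hcol.eq_of_isEdge (Nat.card_fin d).le hsimple hvw ⟨hF, hvF⟩ hwF ⟨hG, hwG⟩ hvG
  · exact hcol.ne_of_isEdge hsimple hne huv huw ⟨hF, huF⟩ hvF ⟨hG, huG⟩ hwG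
end
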